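/- (Example 3.5, Gaussian error exponent) Let κ ≠ κ̄ be real numbers and σ > 0, and set a = (κ − κ̄)²/(2σ²). Let the null hypothesis P_n be the n-fold product of the Gaussian distribution N(κ, σ²) on ℝⁿ and the alternative hypothesis Q_n be the n-fold product of N(κ̄, σ²) on ℝⁿ. Then for every r > 0, B_e(r) = (√r − √a)² if r ≤ a, and B_e(r) = 0 if r > a. -/

import Mathlib

open MeasureTheory Filter
open scoped ENNReal NNReal

/-- The exponent `-(1/n) log p` of a nonneg extended real `p`, valued in `EReal`,
with the conventions `-log 0 = +∞` and `-log ∞ = -∞`. -/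
noncomputable def expRate (n : ℕ) (p : ℝ≥0∞) : EReal :=
  (((n : ℝ)⁻¹ : ℝ) : EReal) * (-(ENNReal.log p))

/-- The likelihood ratio `dμ/dν`, defined to be `+∞` on the part of the space where
`μ` is singular with respect to `ν` (μ-a.e.). -/
noncomputable def lratio {Ω : Type*} [MeasurableSpace Ω] (μ ν : Measure Ω) (x : Ω) : ℝ≥0∞ :=
  μ.rnDeriv (μ + ν) x / ν.rnDeriv (μ + ν) x

section Setup

variable {Ω : ℕ → Type*} [∀ n, MeasurableSpace (Ω n)]

/-- `η(R) = liminf_n -(1/n) log P_n{ (1/n) log dP_n/dQ_n ≤ R }`. -/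
noncomputable def eta (P Q : ∀ n, Measure (Ω n)) (R : ℝ) : EReal :=
  Filter.atTop.liminf fun n =>
    expRate n ((P n) {x | lratio (P n) (Q n) x ≤ ENNReal.ofReal (Real.exp (n * R))})

/-- `E` is `r`-achievable: there are measurable acceptance regions `A n` with
`liminf -(1/n) log μ_n ≥ r` and `liminf -(1/n) log λ_n ≥ E`. -/
def rAchievable (P Q : ∀ n, Measure (Ω n)) (r E : ℝ) : Prop :=
  ∃ A : ∀ n, Set (Ω n), (∀ n, MeasurableSet (A n)) ∧
    (r : EReal) ≤ Filter.atTop.liminf (fun n => expRate n ((P n) (A n)ᶜ)) ∧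
    (E : EReal) ≤ Filter.atTop.liminf (fun n => expRate n ((Q n) (A n)))

/-- The optimal error exponent `B_e(r)`: the supremum of all `r`-achievable `E`. -/
noncomputable def Be (P Q : ∀ n, Measure (Ω n)) (r : ℝ) : EReal :=
  sSup {x : EReal | ∃ E : ℝ, rAchievable P Q r E ∧ x = (E : EReal)}

end Setup

open ProbabilityTheory

/-!
For the converse, compare both hypotheses with a third Gaussian `N(m, σ²)` between them. An event
whose `N(κ, σ²)`-probability decays faster than the divergence `(m - κ)² / (2σ²)` is negligible
under `N(m, σ²)`: change measure and apply the law of large numbers to the log-likelihood ratio. So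
if `r > (m - κ)² / (2σ²)`, the rejection region is `N(m, σ²)`-negligible, the acceptance region is
not, and the second error exponent is at most `(m - κ̄)² / (2σ²)`. Letting
`(m - κ)² / (2σ²)` increase to `r ≤ a` gives `(√r - √a)²`, while `m = κ̄` gives `0` once `r > a`.
Conversely, thresholding the sample mean at that limiting `m` attains the bound, by Chernoff's
inequality.
-/

section Exponents

open Topology

lemma coe_le_expRate_iff {n : ℕ} (hn : n ≠ 0) {p : ℝ≥0∞} {r : ℝ} :
    (r : EReal) ≤ expRate n p ↔ p ≤ ENNReal.ofReal (Real.exp (-(n * r))) := by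
  have hn' : (0 : EReal) < ((n : ℝ) : EReal) := by
    exact_mod_cast Nat.pos_of_ne_zero hn
  rw [expRate, EReal.coe_inv, mul_comm, ← div_eq_mul_inv,
    EReal.le_div_iff_mul_le hn' (EReal.coe_ne_top _), EReal.le_neg, ← ENNReal.log_le_log_iff,
    ENNReal.log_ofReal_of_pos (Real.exp_pos _), Real.log_exp, mul_comm, EReal.coe_neg,
    EReal.coe_mul]

lemma coe_le_liminf_expRate {p : ℕ → ℝ≥0∞} {r : ℝ}
    (h : ∀ n, p n ≤ ENNReal.ofReal (Real.exp (-(n * r)))) :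
    (r : EReal) ≤ atTop.liminf fun n => expRate n (p n) :=
  le_liminf_of_le (by isBoundedDefault) <| (eventually_ne_atTop 0).mono fun n hn =>
    (coe_le_expRate_iff hn).2 (h n)

lemma eventually_le_exp_of_lt_liminf_expRate {p : ℕ → ℝ≥0∞} {r : ℝ}
    (h : (r : EReal) < atTop.liminf fun n => expRate n (p n)) :
    ∀ᶠ n : ℕ in atTop, p n ≤ ENNReal.ofReal (Real.exp (-(n * r))) := by
  filter_upwards [eventually_lt_of_lt_liminf h, eventually_ne_atTop 0] with n hlt hn
  exact (coe_le_expRate_iff hn).1 hlt.le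

variable {Ω : ℕ → Type*} [∀ n, MeasurableSpace (Ω n)] {P Q R : ∀ n, Measure (Ω n)} {r E : ℝ}

lemma rAchievable.coe_le_Be (h : rAchievable P Q r E) : (E : EReal) ≤ Be P Q r :=
  le_sSup ⟨E, h, rfl⟩

lemma Be_le_of_forall_rAchievable {B : EReal}
    (h : ∀ E : ℝ, rAchievable P Q r E → (E : EReal) ≤ B) :
    Be P Q r ≤ B := by
  refine sSup_le ?_
  rintro _ ⟨E, hE, rfl⟩
  exact h E hE

lemma Be_nonneg [∀ n, IsProbabilityMeasure (Q n)] : 0 ≤ Be P Q r := by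
  refine rAchievable.coe_le_Be (E := 0) ⟨fun _ => Set.univ, fun _ => .univ, ?_, ?_⟩ <;>
    exact coe_le_liminf_expRate fun n => by simp

/-- The strong converse half of Stein's lemma for testing `P` against `R`, at exponent `d`: events
whose `P`-probability decays faster than `exp (-n d)` have vanishing `R`-probability. The exponent
is `EReal`-valued so that it may be an infinite Kullback-Leibler divergence. -/
def SteinStrongConverse (P R : ∀ n, Measure (Ω n)) (d : EReal) : Prop :=
  ∀ S : ∀ n, Set (Ω n), (∀ n, MeasurableSet (S n)) →
    d < atTop.liminf (fun n => expRate n (P n (S n))) →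
      Tendsto (fun n => R n (S n)) atTop (𝓝 0)

theorem SteinStrongConverse.Be_le [∀ n, IsProbabilityMeasure (R n)] {d e : EReal}
    (hP : SteinStrongConverse P R d) (hQ : SteinStrongConverse Q R e) (hd : d < r) :
    Be P Q r ≤ e := by
  refine Be_le_of_forall_rAchievable fun E ⟨A, hA, hrateP, hrateQ⟩ => ?_
  by_contra! he
  have hcompl : Tendsto (fun n => R n (A n)ᶜ) atTop (𝓝 0) :=
    hP _ (fun n => (hA n).compl) (hd.trans_le hrateP)
  have hA_zero : Tendsto (fun n => R n (A n)) atTop (𝓝 0) := hQ _ hA (he.trans_le hrateQ)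
  have hsum : Tendsto (fun _ : ℕ => (1 : ℝ≥0∞)) atTop (𝓝 (0 + 0)) :=
    (hA_zero.add hcompl).congr fun n => prob_add_prob_compl (hA n)
  simpa using tendsto_nhds_unique hsum tendsto_const_nhds

end Exponents

section Products

variable {ι : Type*} [Fintype ι] {X : ι → Type*} [∀ i, MeasurableSpace (X i)]

lemma lintegral_pi_prod (μ : ∀ i, Measure (X i)) [∀ i, IsProbabilityMeasure (μ i)]
    {f : ∀ i, X i → ℝ≥0∞} (hf : ∀ i, Measurable (f i)) :
    ∫⁻ x, ∏ i, f i (x i) ∂Measure.pi μ = ∏ i, ∫⁻ x, f i x ∂μ i := by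
  rw [lintegral_prod_eq_prod_lintegral_of_indepFun Finset.univ (fun i (x : ∀ i, X i) => f i (x i))
    (iIndepFun_pi fun i => (hf i).aemeasurable) (fun i => (hf i).comp (measurable_pi_apply i))]
  exact Finset.prod_congr rfl fun i _ => (measurePreserving_eval μ i).lintegral_comp (hf i)

lemma pi_eq_withDensity_prod_rnDeriv {μ ν : ∀ i, Measure (X i)} [∀ i, IsProbabilityMeasure (μ i)]
    [∀ i, SigmaFinite (ν i)] (hνμ : ∀ i, ν i ≪ μ i) :
    Measure.pi ν = (Measure.pi μ).withDensity fun x => ∏ i, (ν i).rnDeriv (μ i) (x i) := by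
  refine Measure.pi_eq fun s hs => ?_
  have indicator_prod (x : ∀ i, X i) :
      (Set.univ.pi s).indicator (fun x => ∏ i, (ν i).rnDeriv (μ i) (x i)) x =
        ∏ i, (s i).indicator ((ν i).rnDeriv (μ i)) (x i) := by
    by_cases hx : x ∈ Set.univ.pi s
    · rw [Set.indicator_of_mem hx]
      exact Finset.prod_congr rfl fun i _ => (Set.indicator_of_mem (hx i trivial) _).symm
    · obtain ⟨i, hi⟩ : ∃ i, x i ∉ s i := by simpa using hx
      rw [Set.indicator_of_notMem hx,
        Finset.prod_eq_zero (Finset.mem_univ i) (Set.indicator_of_notMem hi _)]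
  calc (Measure.pi μ).withDensity (fun x => ∏ i, (ν i).rnDeriv (μ i) (x i)) (Set.univ.pi s)
      = ∫⁻ x, ∏ i, (s i).indicator ((ν i).rnDeriv (μ i)) (x i) ∂Measure.pi μ := by
        rw [withDensity_apply _ (.univ_pi hs), ← lintegral_indicator (.univ_pi hs)]
        exact lintegral_congr indicator_prod
    _ = ∏ i, ∫⁻ x in s i, (ν i).rnDeriv (μ i) x ∂μ i := by
        rw [lintegral_pi_prod μ fun i => (Measure.measurable_rnDeriv _ _).indicator (hs i)]
        exact Finset.prod_congr rfl fun i _ => lintegral_indicator (hs i) _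
    _ = ∏ i, ν i (s i) :=
        Finset.prod_congr rfl fun i _ => Measure.setLIntegral_rnDeriv (hνμ i) _

lemma prod_rnDeriv_ae_eq_exp_sum_llr {μ ν : ∀ i, Measure (X i)} [∀ i, SigmaFinite (μ i)]
    [∀ i, SigmaFinite (ν i)] (hνμ : ∀ i, ν i ≪ μ i) :
    (fun x => ∏ i, (ν i).rnDeriv (μ i) (x i)) =ᵐ[Measure.pi ν]
      fun x => ENNReal.ofReal (Real.exp (∑ i, llr (ν i) (μ i) (x i))) := by
  have rnDeriv_eq (i : ι) : ∀ᵐ y ∂ν i,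
      (ν i).rnDeriv (μ i) y = ENNReal.ofReal (Real.exp (llr (ν i) (μ i) y)) := by
    filter_upwards [Measure.rnDeriv_pos (hνμ i), (hνμ i).ae_le (Measure.rnDeriv_lt_top (ν i) (μ i))]
      with y hpos hlt
    rw [llr, Real.exp_log (ENNReal.toReal_pos hpos.ne' hlt.ne), ENNReal.ofReal_toReal hlt.ne]
  have rnDeriv_eq_pi : ∀ᵐ x ∂Measure.pi ν, ∀ i,
      (ν i).rnDeriv (μ i) (x i) = ENNReal.ofReal (Real.exp (llr (ν i) (μ i) (x i))) :=
    ae_all_iff.2 fun i => (Measure.quasiMeasurePreserving_eval ν i).ae (rnDeriv_eq i)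
  filter_upwards [rnDeriv_eq_pi] with x hx
  rw [Real.exp_sum, ENNReal.ofReal_prod_of_nonneg fun i _ => (Real.exp_pos _).le]
  exact Finset.prod_congr rfl fun i _ => hx i

lemma withDensity_apply_le_mul_add {α : Type*} [MeasurableSpace α] (μ : Measure α)
    {f : α → ℝ≥0∞} (hf : Measurable f) {S : Set α} (hS : MeasurableSet S) (c : ℝ≥0∞) :
    μ.withDensity f S ≤ c * μ S + μ.withDensity f {x | c < f x} := by
  have hT : MeasurableSet {x | c < f x} := measurableSet_lt measurable_const hf
  have hdiff : μ.withDensity f (S \ {x | c < f x}) ≤ c * μ S :=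
    calc μ.withDensity f (S \ {x | c < f x})
        = ∫⁻ x in S \ {x | c < f x}, f x ∂μ := withDensity_apply _ (hS.diff hT)
      _ ≤ ∫⁻ _ in S \ {x | c < f x}, c ∂μ :=
          setLIntegral_mono measurable_const fun x hx => not_lt.1 hx.2
      _ = c * μ (S \ {x | c < f x}) := setLIntegral_const _ _
      _ ≤ c * μ S := by gcongr; exact Set.sdiff_subset
  calc μ.withDensity f S
      ≤ μ.withDensity f (S \ {x | c < f x} ∪ {x | c < f x}) :=
        measure_mono (Set.subset_union_left.trans Set.sdiff_union_self.superset)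
    _ ≤ μ.withDensity f (S \ {x | c < f x}) + μ.withDensity f {x | c < f x} :=
        measure_union_le _ _
    _ ≤ c * μ S + μ.withDensity f {x | c < f x} := by gcongr

lemma pi_le_exp_mul_pi_add {μ ν : ∀ i, Measure (X i)} [∀ i, IsProbabilityMeasure (μ i)]
    [∀ i, SigmaFinite (ν i)] (hνμ : ∀ i, ν i ≪ μ i) {S : Set (∀ i, X i)} (hS : MeasurableSet S)
    (c : ℝ) :
    Measure.pi ν S ≤ ENNReal.ofReal (Real.exp c) * Measure.pi μ S +
      Measure.pi ν {x | c < ∑ i, llr (ν i) (μ i) (x i)} := by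
  have hdensity_gt : Measure.pi ν
      {x | ENNReal.ofReal (Real.exp c) < ∏ i, (ν i).rnDeriv (μ i) (x i)} =
        Measure.pi ν {x | c < ∑ i, llr (ν i) (μ i) (x i)} := by
    refine measure_congr (eventuallyEq_set.2 ?_)
    filter_upwards [prod_rnDeriv_ae_eq_exp_sum_llr hνμ] with x hx
    rw [hx, ENNReal.ofReal_lt_ofReal_iff_of_nonneg (Real.exp_pos _).le, Real.exp_lt_exp]
  rw [← hdensity_gt, pi_eq_withDensity_prod_rnDeriv hνμ]
  exact withDensity_apply_le_mul_add _ (by fun_prop) hS _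

end Products

section IID

open Topology InformationTheory

variable {X : Type*} [MeasurableSpace X]

lemma infinitePi_map_fin_eq_pi (μ : Measure X) [IsProbabilityMeasure μ] (n : ℕ) :
    (Measure.infinitePi fun _ : ℕ => μ).map (fun ω (i : Fin n) => ω i) =
      Measure.pi fun _ : Fin n => μ := by
  rw [Measure.map_infinitePi_infinitePi_of_inj (P := fun _ : ℕ => μ) Fin.val_injective,
    Measure.infinitePi_eq_pi]

lemma strong_law_infinitePi (μ : Measure X) [IsProbabilityMeasure μ] {f : X → ℝ}
    (hf : Measurable f) (hfi : Integrable f μ) :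
    ∀ᵐ ω ∂Measure.infinitePi fun _ : ℕ => μ,
      Tendsto (fun n : ℕ => (∑ i ∈ Finset.range n, f (ω i)) / n) atTop (𝓝 (∫ x, f x ∂μ)) := by
  have eval_mp := measurePreserving_eval_infinitePi (fun _ : ℕ => μ)
  have hindep : iIndepFun (fun (i : ℕ) (ω : ℕ → X) => f (ω i)) (Measure.infinitePi fun _ => μ) :=
    iIndepFun_infinitePi (X := fun _ => f) fun _ => hf
  have hident (i : ℕ) : IdentDistrib (fun ω : ℕ → X => f (ω i)) (fun ω => f (ω 0))
      (Measure.infinitePi fun _ => μ) (Measure.infinitePi fun _ => μ) :=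
    IdentDistrib.comp ⟨(eval_mp i).aemeasurable, (eval_mp 0).aemeasurable, by
      rw [(eval_mp i).map_eq, (eval_mp 0).map_eq]⟩ hf
  have hmean : ∫ ω, f (ω 0) ∂(Measure.infinitePi fun _ : ℕ => μ) = ∫ x, f x ∂μ := by
    rw [← (eval_mp 0).map_eq, integral_map (eval_mp 0).aemeasurable hf.aestronglyMeasurable]
    simp only [Function.eval, (eval_mp 0).map_eq]
  rw [← hmean]
  exact strong_law_ae_real (fun (i : ℕ) (ω : ℕ → X) => f (ω i))
    ((eval_mp 0).integrable_comp_of_integrable hfi) (fun _ _ hij => hindep.indepFun hij) hident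

lemma tendsto_pi_sum_gt {μ : Measure X} [IsProbabilityMeasure μ] {f : X → ℝ}
    (hf : Measurable f) (hfi : Integrable f μ) {b : ℝ} (hb : ∫ x, f x ∂μ < b) :
    Tendsto (fun n : ℕ => (Measure.pi fun _ : Fin n => μ) {x | n * b < ∑ i, f (x i)})
      atTop (𝓝 0) := by
  have hconv := tendstoInMeasure_iff_dist.1 (tendstoInMeasure_of_tendsto_ae
    (fun n => Measurable.aestronglyMeasurable (by fun_prop))
    (strong_law_infinitePi μ hf hfi)) _ (sub_pos.2 hb)
  refine tendsto_of_tendsto_of_tendsto_of_le_of_le' tendsto_const_nhds hconv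
    (.of_forall fun _ => zero_le) ?_
  filter_upwards [eventually_gt_atTop 0] with n hn
  rw [← infinitePi_map_fin_eq_pi μ n,
    Measure.map_apply (by fun_prop) (measurableSet_lt (by fun_prop) (by fun_prop))]
  refine measure_mono fun ω (hω : n * b < ∑ i : Fin n, f (ω i)) => ?_
  rw [Fin.sum_univ_eq_sum_range (fun i => f (ω i)), mul_comm,
    ← lt_div_iff₀ (by exact_mod_cast hn)] at hω
  exact (sub_le_sub_right hω.le _).trans (le_abs_self _)

theorem steinStrongConverse_pi (μ ν : Measure X) [IsProbabilityMeasure μ]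
    [IsProbabilityMeasure ν] :
    SteinStrongConverse (fun n => Measure.pi fun _ : Fin n => μ)
      (fun n => Measure.pi fun _ : Fin n => ν) (klDiv ν μ : EReal) := by
  intro S hS hrate
  have hfin : klDiv ν μ ≠ ∞ := fun h => not_top_lt
    (by simpa only [h, EReal.coe_ennreal_top] using hrate)
  obtain ⟨hac, hint⟩ := klDiv_ne_top_iff.1 hfin
  have hkl : (klDiv ν μ : EReal) = ((∫ x, llr ν μ x ∂ν : ℝ) : EReal) := by
    rw [← toReal_klDiv_of_measure_eq hac (by simp), EReal.coe_ennreal_toReal hfin]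
  obtain ⟨c, hdc, hc⟩ := EReal.lt_iff_exists_real_btwn.1 hrate
  obtain ⟨b, hb, hbc⟩ := exists_between (EReal.coe_lt_coe_iff.1 (hkl ▸ hdc))
  have hexp : Tendsto (fun n : ℕ => ENNReal.ofReal (Real.exp (-(n * (c - b))))) atTop (𝓝 0) := by
    have hneg : Tendsto (fun n : ℕ => -(n * (c - b))) atTop atBot :=
      tendsto_neg_atTop_atBot.comp
        (tendsto_natCast_atTop_atTop.atTop_mul_const (sub_pos.2 hbc))
    simpa using ENNReal.tendsto_ofReal (Real.tendsto_exp_atBot.comp hneg)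
  have hbound := hexp.add (tendsto_pi_sum_gt (measurable_llr ν μ) hint hb)
  rw [add_zero] at hbound
  refine tendsto_of_tendsto_of_tendsto_of_le_of_le' tendsto_const_nhds hbound
    (.of_forall fun _ => zero_le) ?_
  filter_upwards [eventually_le_exp_of_lt_liminf_expRate hc] with n hn
  refine (pi_le_exp_mul_pi_add (fun _ => hac) (hS n) (n * b)).trans ?_
  gcongr
  calc ENNReal.ofReal (Real.exp (n * b)) * Measure.pi (fun _ : Fin n => μ) (S n)
      ≤ ENNReal.ofReal (Real.exp (n * b)) * ENNReal.ofReal (Real.exp (-(n * c))) := by gcongr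
    _ = ENNReal.ofReal (Real.exp (-(n * (c - b)))) := by
        rw [← ENNReal.ofReal_mul (Real.exp_pos _).le, ← Real.exp_add]
        ring_nf

lemma Be_pi_le_klDiv {μ₀ μ₁ : Measure X} (ν : Measure X) [IsProbabilityMeasure μ₀]
    [IsProbabilityMeasure μ₁] [IsProbabilityMeasure ν] {r : ℝ} (h : (klDiv ν μ₀ : EReal) < r) :
    Be (fun n => Measure.pi fun _ : Fin n => μ₀) (fun n => Measure.pi fun _ : Fin n => μ₁) r ≤
      klDiv ν μ₁ :=
  (steinStrongConverse_pi μ₀ ν).Be_le (steinStrongConverse_pi μ₁ ν) h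

end IID

section Chernoff

section Cgf

variable {ι : Type*} [Fintype ι] {X : ι → Type*} [∀ i, MeasurableSpace (X i)]
  {μ : ∀ i, Measure (X i)} [∀ i, IsProbabilityMeasure (μ i)] {f : ∀ i, X i → ℝ} {s : ℝ}

lemma integrable_exp_mul_comp_eval (hint : ∀ i, Integrable (fun x => Real.exp (s * f i x)) (μ i))
    (i : ι) : Integrable (fun x : ∀ i, X i => Real.exp (s * f i (x i))) (Measure.pi μ) :=
  (measurePreserving_eval μ i).integrable_comp_of_integrable (hint i)

lemma integrable_exp_mul_pi_sum (hf : ∀ i, Measurable (f i))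
    (hint : ∀ i, Integrable (fun x => Real.exp (s * f i x)) (μ i)) :
    Integrable (fun x : ∀ i, X i => Real.exp (s * ∑ i, f i (x i))) (Measure.pi μ) := by
  simpa only [Finset.sum_apply] using
    (iIndepFun_pi fun i => (hf i).aemeasurable).integrable_exp_mul_sum
      (fun i => (hf i).comp (measurable_pi_apply i)) (s := Finset.univ)
      fun i _ => integrable_exp_mul_comp_eval hint i

lemma cgf_pi_sum (hf : ∀ i, Measurable (f i))
    (hint : ∀ i, Integrable (fun x => Real.exp (s * f i x)) (μ i)) :
    cgf (fun x : ∀ i, X i => ∑ i, f i (x i)) (Measure.pi μ) s = ∑ i, cgf (f i) (μ i) s := by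
  have cgf_eval (i : ι) :
      cgf (fun x : ∀ i, X i => f i (x i)) (Measure.pi μ) s = cgf (f i) (μ i) s := by
    rw [cgf, cgf, ← (measurePreserving_eval μ i).map_eq, mgf_map
      (measurePreserving_eval μ i).aemeasurable (by fun_prop)]
    rfl
  have hsum := (iIndepFun_pi fun i => (hf i).aemeasurable).cgf_sum
    (fun i => (hf i).comp (measurable_pi_apply i)) (s := Finset.univ)
    fun i _ => integrable_exp_mul_comp_eval hint i
  rw [Finset.sum_fn] at hsum
  exact hsum.trans (Finset.sum_congr rfl fun i _ => cgf_eval i)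

end Cgf

variable {X : Type*} [MeasurableSpace X] {μ ν : Measure X} [IsProbabilityMeasure μ]
  [IsProbabilityMeasure ν] {f : X → ℝ} {s t θ : ℝ}

lemma pi_sum_ge_le_exp_cgf (hf : Measurable f) (hs : 0 ≤ s)
    (hint : Integrable (fun x => Real.exp (s * f x)) μ) (n : ℕ) :
    Measure.pi (fun _ : Fin n => μ) {x | n * θ ≤ ∑ i, f (x i)} ≤
      ENNReal.ofReal (Real.exp (-(n * (s * θ - cgf f μ s)))) := by
  have hbound := measure_ge_le_exp_cgf (n * θ) hs
    (integrable_exp_mul_pi_sum (ι := Fin n) (fun _ => hf) fun _ => hint)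
  rw [cgf_pi_sum (fun _ => hf) fun _ => hint, Finset.sum_const, Finset.card_fin, nsmul_eq_mul]
    at hbound
  rw [← ofReal_measureReal]
  refine ENNReal.ofReal_le_ofReal (hbound.trans_eq ?_)
  ring_nf

lemma pi_sum_le_le_exp_cgf (hf : Measurable f) (hs : s ≤ 0)
    (hint : Integrable (fun x => Real.exp (s * f x)) μ) (n : ℕ) :
    Measure.pi (fun _ : Fin n => μ) {x | ∑ i, f (x i) ≤ n * θ} ≤
      ENNReal.ofReal (Real.exp (-(n * (s * θ - cgf f μ s)))) := by
  have hneg := pi_sum_ge_le_exp_cgf (μ := μ) (θ := -θ) hf.neg (neg_nonneg.2 hs)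
    (by simpa using hint) n
  simpa [cgf_neg] using hneg

theorem rAchievable_pi_chernoff (hf : Measurable f) (hs : 0 ≤ s) (ht : t ≤ 0)
    (hμ : Integrable (fun x => Real.exp (s * f x)) μ)
    (hν : Integrable (fun x => Real.exp (t * f x)) ν) (θ : ℝ) :
    rAchievable (fun n => Measure.pi fun _ : Fin n => μ) (fun n => Measure.pi fun _ : Fin n => ν)
      (s * θ - cgf f μ s) (t * θ - cgf f ν t) := by
  refine ⟨fun n => {x | ∑ i, f (x i) < n * θ},
    fun n => measurableSet_lt (by fun_prop) (by fun_prop),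
    coe_le_liminf_expRate fun n => ?_, coe_le_liminf_expRate fun n => ?_⟩
  · have hcompl : {x : Fin n → X | ∑ i, f (x i) < n * θ}ᶜ = {x | n * θ ≤ ∑ i, f (x i)} := by
      ext; simp
    rw [hcompl]
    exact pi_sum_ge_le_exp_cgf hf hs hμ n
  · exact (pi_sum_le_le_exp_cgf hf ht hν n).trans'
      (measure_mono fun x hx => (show ∑ i, f (x i) < n * θ from hx).le)

end Chernoff

section Gaussian

open InformationTheory

lemma klDiv_tilted_self {α : Type*} [MeasurableSpace α] {μ : Measure α} [IsProbabilityMeasure μ]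
    {f : α → ℝ} (hexp : Integrable (fun x => Real.exp (f x)) μ) (hf : Integrable f (μ.tilted f)) :
    klDiv (μ.tilted f) μ =
      ENNReal.ofReal (∫ x, f x ∂(μ.tilted f) - Real.log (∫ x, Real.exp (f x) ∂μ)) := by
  have := isProbabilityMeasure_tilted hexp
  have hac := tilted_absolutelyContinuous μ f
  have hllr : llr (μ.tilted f) μ =ᵐ[μ.tilted f] fun x => f x - Real.log (∫ x, Real.exp (f x) ∂μ) :=
    hac.ae_le (log_rnDeriv_tilted_left_self hexp)
  rw [klDiv_of_ac_of_integrable hac ((hf.sub (integrable_const _)).congr hllr.symm),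
    integral_congr_ae hllr, integral_sub hf (integrable_const _)]
  simp

lemma gaussianReal_tilted_mul (m t : ℝ) (v : ℝ≥0) :
    (gaussianReal m v).tilted (fun x => t * x) = gaussianReal (m + v * t) v := by
  rcases eq_or_ne v 0 with rfl | hv
  · have hconst : (fun x => t * x) =ᵐ[Measure.dirac m] fun _ => t * m := by
      simp [EventuallyEq, ae_dirac_eq]
    simp [gaussianReal_zero_var, tilted_congr hconst]
  have hmgf : ∫ x, Real.exp (t * x) ∂gaussianReal m v = Real.exp (m * t + v * t ^ 2 / 2) :=
    congrFun mgf_id_gaussianReal t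
  rw [Measure.tilted, hmgf, gaussianReal_of_var_ne_zero _ hv, gaussianReal_of_var_ne_zero _ hv,
    ← withDensity_mul _ (measurable_gaussianPDF _ _) (by fun_prop)]
  congr 1
  ext1 x
  rw [Pi.mul_apply, gaussianPDF, gaussianPDF, ← ENNReal.ofReal_mul (gaussianPDFReal_nonneg _ _ _),
    gaussianPDFReal, gaussianPDFReal, mul_assoc, ← Real.exp_sub, ← Real.exp_add]
  congr 3
  have : (v : ℝ) ≠ 0 := by exact_mod_cast hv
  field_simp
  ring

lemma klDiv_gaussianReal_gaussianReal (m m' : ℝ) {v : ℝ≥0} (hv : v ≠ 0) :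
    klDiv (gaussianReal m v) (gaussianReal m' v) =
      ENNReal.ofReal ((m - m') ^ 2 / (2 * v)) := by
  have hv' : (v : ℝ) ≠ 0 := by exact_mod_cast hv
  set t := (m - m') / v with ht
  have htilt : gaussianReal m v = (gaussianReal m' v).tilted (fun x => t * x) := by
    rw [gaussianReal_tilted_mul, ht, mul_div_cancel₀ _ hv', add_sub_cancel]
  have hmean : ∫ x, t * x ∂gaussianReal m v = t * m := by
    rw [integral_const_mul, integral_id_gaussianReal]
  have hlog_mgf : Real.log (∫ x, Real.exp (t * x) ∂gaussianReal m' v) = m' * t + v * t ^ 2 / 2 :=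
    cgf_gaussianReal (X := id) (by simp) t
  have hint : Integrable (fun x => t * x) (gaussianReal m v) :=
    ((memLp_id_gaussianReal 1).integrable le_rfl).const_mul t
  rw [htilt] at hint hmean ⊢
  rw [klDiv_tilted_self (integrable_exp_mul_gaussianReal t) hint, hmean, hlog_mgf, ht]
  congr 1
  field_simp
  ring

end Gaussian

section GaussianExponent

open Topology

variable {κ κb r : ℝ} {v : ℝ≥0}

lemma Be_pi_gaussianReal_le (hv : v ≠ 0) {m : ℝ} (h : (m - κ) ^ 2 / (2 * v) < r) :
    Be (fun n => Measure.pi fun _ : Fin n => gaussianReal κ v)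
      (fun n => Measure.pi fun _ : Fin n => gaussianReal κb v) r ≤
        ((m - κb) ^ 2 / (2 * v) : ℝ) := by
  have hkl := Be_pi_le_klDiv (μ₀ := gaussianReal κ v) (μ₁ := gaussianReal κb v) (r := r)
    (gaussianReal m v)
  simp only [klDiv_gaussianReal_gaussianReal _ _ hv, EReal.coe_ennreal_ofReal,
    max_eq_left (show 0 ≤ (m - κ) ^ 2 / (2 * (v : ℝ)) by positivity),
    max_eq_left (show 0 ≤ (m - κb) ^ 2 / (2 * (v : ℝ)) by positivity)] at hkl
  exact hkl (EReal.coe_lt_coe_iff.2 h)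

lemma cgf_const_mul_gaussianReal (c s : ℝ) :
    cgf (fun x => c * x) (gaussianReal κ v) s = κ * (c * s) + v * (c * s) ^ 2 / 2 := by
  rw [cgf, mgf_const_mul]
  exact cgf_gaussianReal (X := id) (by simp) (c * s)

lemma integrable_exp_mul_mul_gaussianReal (c s : ℝ) :
    Integrable (fun x => Real.exp (s * (c * x))) (gaussianReal κ v) := by
  simpa only [mul_assoc] using integrable_exp_mul_gaussianReal (s * c)

lemma rAchievable_pi_gaussianReal (hv : v ≠ 0) {t : ℝ} (ht : t ∈ Set.Icc 0 1) :
    rAchievable (fun n => Measure.pi fun _ : Fin n => gaussianReal κ v)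
      (fun n => Measure.pi fun _ : Fin n => gaussianReal κb v)
      (t ^ 2 * ((κ - κb) ^ 2 / (2 * v))) ((1 - t) ^ 2 * ((κ - κb) ^ 2 / (2 * v))) := by
  have hv' : (v : ℝ) ≠ 0 := by exact_mod_cast hv
  -- Both tilting parameters move the mean of their hypothesis to `κ + t * (κb - κ)`.
  have htest := rAchievable_pi_chernoff (f := fun x => (κb - κ) * x) (s := t / v)
    (t := (t - 1) / v) (by fun_prop)
    (div_nonneg ht.1 v.coe_nonneg) (div_nonpos_of_nonpos_of_nonneg (sub_nonpos.2 ht.2) v.coe_nonneg)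
    (integrable_exp_mul_mul_gaussianReal (κ := κ) (v := v) _ _)
    (integrable_exp_mul_mul_gaussianReal (κ := κb) (v := v) _ _)
    ((κb - κ) * (κ + t * (κb - κ)))
  rw [cgf_const_mul_gaussianReal, cgf_const_mul_gaussianReal] at htest
  convert htest using 1 <;> field_simp <;> ring

theorem Be_pi_gaussianReal_sq_mul (hv : v ≠ 0) (hκ : κ ≠ κb) {t : ℝ} (ht₀ : 0 < t) (ht₁ : t ≤ 1) :
    Be (fun n => Measure.pi fun _ : Fin n => gaussianReal κ v)
      (fun n => Measure.pi fun _ : Fin n => gaussianReal κb v)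
      (t ^ 2 * ((κ - κb) ^ 2 / (2 * v))) = ((1 - t) ^ 2 * ((κ - κb) ^ 2 / (2 * v)) : ℝ) := by
  have ha : 0 < (κ - κb) ^ 2 / (2 * (v : ℝ)) :=
    div_pos (pow_two_pos_of_ne_zero (sub_ne_zero.2 hκ)) (by positivity)
  refine le_antisymm ?_ (rAchievable_pi_gaussianReal hv ⟨ht₀.le, ht₁⟩).coe_le_Be
  have hlim : Tendsto (fun s : ℝ => (((1 - s) ^ 2 * ((κ - κb) ^ 2 / (2 * v)) : ℝ) : EReal))
      (𝓝[<] t) (𝓝 ((1 - t) ^ 2 * ((κ - κb) ^ 2 / (2 * v)) : ℝ)) :=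
    ((continuous_coe_real_ereal.comp (by fun_prop)).tendsto t).mono_left nhdsWithin_le_nhds
  refine ge_of_tendsto hlim ?_
  filter_upwards [Ioo_mem_nhdsLT ht₀] with s hs
  have hconverse := Be_pi_gaussianReal_le (κb := κb) (m := κ + s * (κb - κ))
    (r := t ^ 2 * ((κ - κb) ^ 2 / (2 * v))) hv <|
    calc (κ + s * (κb - κ) - κ) ^ 2 / (2 * v) = s ^ 2 * ((κ - κb) ^ 2 / (2 * v)) := by ring
      _ < t ^ 2 * ((κ - κb) ^ 2 / (2 * v)) :=
        mul_lt_mul_of_pos_right (pow_lt_pow_left₀ hs.2 hs.1.le two_ne_zero) ha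
  convert hconverse using 2
  ring

lemma Be_pi_gaussianReal_of_le (hv : v ≠ 0) (hr : 0 < r) (h : r ≤ (κ - κb) ^ 2 / (2 * v)) :
    Be (fun n => Measure.pi fun _ : Fin n => gaussianReal κ v)
      (fun n => Measure.pi fun _ : Fin n => gaussianReal κb v) r =
        ((√r - √((κ - κb) ^ 2 / (2 * v))) ^ 2 : ℝ) := by
  have ha : 0 < √((κ - κb) ^ 2 / (2 * v)) := Real.sqrt_pos.2 (hr.trans_le h)
  have hκ : κ ≠ κb := by
    rintro rfl
    simp at ha
  have hBe := Be_pi_gaussianReal_sq_mul hv hκ (div_pos (Real.sqrt_pos.2 hr) ha)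
    (div_le_one_of_le₀ (Real.sqrt_le_sqrt h) ha.le)
  rwa [← Real.sq_sqrt (hr.trans_le h).le, Real.sqrt_sq ha.le, ← mul_pow, ← mul_pow, one_sub_mul,
    div_mul_cancel₀ _ ha.ne', Real.sq_sqrt hr.le, sub_sq_comm] at hBe

lemma Be_pi_gaussianReal_of_lt (hv : v ≠ 0) (h : (κ - κb) ^ 2 / (2 * v) < r) :
    Be (fun n => Measure.pi fun _ : Fin n => gaussianReal κ v)
      (fun n => Measure.pi fun _ : Fin n => gaussianReal κb v) r = 0 := by
  refine le_antisymm ?_ Be_nonneg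
  simpa using Be_pi_gaussianReal_le (κb := κb) (m := κb) hv (by rwa [sub_sq_comm])

end GaussianExponent

/-- Example 3.5: Gaussian error exponent. For i.i.d. hypotheses `N(κ,σ²)^{⊗n}` vs
`N(κ̄,σ²)^{⊗n}` with `κ ≠ κ̄` and `a = (κ-κ̄)²/(2σ²)`, for every `r > 0`
 `B_e(r) = (√r - √a)²` if `r ≤ a` and `B_e(r) = 0` otherwise. -/
theorem gaussian_error_exponent (κ κb σ : ℝ) (hκ : κ ≠ κb) (hσ : 0 < σ)
    (r : ℝ) (hr : 0 < r) :
    Be (fun n => Measure.pi fun _ : Fin n => gaussianReal κ ⟨σ ^ 2, sq_nonneg σ⟩)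
       (fun n => Measure.pi fun _ : Fin n => gaussianReal κb ⟨σ ^ 2, sq_nonneg σ⟩) r
      = if r ≤ (κ - κb) ^ 2 / (2 * σ ^ 2) then
          (((Real.sqrt r - Real.sqrt ((κ - κb) ^ 2 / (2 * σ ^ 2))) ^ 2 : ℝ) : EReal)
        else 0 := by
  set v : ℝ≥0 := ⟨σ ^ 2, sq_nonneg σ⟩
  have hv : v ≠ 0 := fun h => (pow_pos hσ 2).ne' (congrArg NNReal.toReal h)
  change _ = if r ≤ (κ - κb) ^ 2 / (2 * v) then
    (((√r - √((κ - κb) ^ 2 / (2 * v))) ^ 2 : ℝ) : EReal) else 0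
  split_ifs with hra
  · exact Be_pi_gaussianReal_of_le hv hr hra
  · exact Be_pi_gaussianReal_of_lt hv (not_le.1 hra)
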